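/- Let $R > 0$, $a \in \mathbb{C}$, and let $u$ be a complex-valued function continuous on the closed disk $\overline{B}^2(a,R)$ and harmonic on the open disk $B^2(a,R)$. Then for every $r$ with $0 < r < R$, $u(a+r) - \frac{R^2-r^2}{R^2+r^2}\, u(a) = \frac{rR(R^2-r^2)}{\pi(R^2+r^2)} \int_{-\pi}^{\pi} \frac{\cos\theta}{R^2 + r^2 - 2rR\cos\theta}\, u\left(a + R e^{i\theta}\right) \mathrm{d}\theta$. -/

import Mathlib

open Metric Set

/-- A complex-valued function `u` is harmonic on `G ⊆ ℂ ≅ ℝ²` if it is twice continuously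
differentiable (as a function of two real variables) and satisfies the Laplace equation
`∂²u/∂x² + ∂²u/∂y² = 0` on `G`. -/
def IsHarmonicOn (u : ℂ → ℂ) (G : Set ℂ) : Prop :=
  ContDiffOn ℝ 2 u G ∧ ∀ z ∈ G,
    iteratedFDeriv ℝ 2 u z ![1, 1] + iteratedFDeriv ℝ 2 u z ![Complex.I, Complex.I] = 0

/-!
Let `P(z)` be the Poisson kernel of the disk for the point `w`, and `m` the constant
`(R² - |w - c|²) / (R² + |w - c|²)`. For `|z - c| = R` the denominator of `P(z)` is
`R² + |w - c|² - 2⟪z - c, w - c⟫`, so `P(z) - m` is `P(z)` times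
`2⟪z - c, w - c⟫ / (R² + |w - c|²)`. Averaging this identity against `u` over the circle yields
`u w - m • u c` on the left, by the Poisson formula and the mean value property.
-/

open InnerProductSpace Real

theorem IsHarmonicOn.harmonicOnNhd {u : ℂ → ℂ} {G : Set ℂ} (hu : IsHarmonicOn u G)
    (hG : IsOpen G) : HarmonicOnNhd u G := fun z hz ↦ by
  refine ⟨hu.1.contDiffAt (hG.mem_nhds hz), ?_⟩
  filter_upwards [hG.mem_nhds hz] with y hy
  rw [laplacian_eq_iteratedFDeriv_complexPlane]
  exact hu.2 y hy

theorem inner_circleMap_zero (R r θ φ : ℝ) :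
    ⟪circleMap 0 R θ, circleMap 0 r φ⟫_ℝ = R * r * cos (θ - φ) := by
  simp only [Complex.inner, circleMap_zero, map_mul, Complex.conj_ofReal, Complex.mul_re,
    Complex.mul_im, Complex.conj_re, Complex.conj_im, Complex.ofReal_re, Complex.ofReal_im,
    Complex.exp_ofReal_mul_I_re, Complex.exp_ofReal_mul_I_im, cos_sub]
  ring

theorem poissonKernel_circleMap (c : ℂ) (R r θ φ : ℝ) :
    poissonKernel c (circleMap c r φ) (circleMap c R θ) =
      (R ^ 2 - r ^ 2) / (R ^ 2 + r ^ 2 - 2 * r * R * cos (θ - φ)) := by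
  simp only [poissonKernel_def, circleMap_sub_center, norm_sub_sq_real, norm_circleMap_zero,
    sq_abs, inner_circleMap_zero]
  ring_nf

theorem poissonKernel_sub_div {c w z : ℂ} (hzw : z ≠ w) :
    poissonKernel c w z - (‖z - c‖ ^ 2 - ‖w - c‖ ^ 2) / (‖z - c‖ ^ 2 + ‖w - c‖ ^ 2) =
      2 * ⟪z - c, w - c⟫_ℝ / (‖z - c‖ ^ 2 + ‖w - c‖ ^ 2) * poissonKernel c w z := by
  have hsub : (z - c) - (w - c) ≠ 0 := by rwa [sub_sub_sub_cancel_right, sub_ne_zero]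
  have hden : 0 < ‖(z - c) - (w - c)‖ ^ 2 := by positivity
  have hsum : 0 < ‖z - c‖ ^ 2 + ‖w - c‖ ^ 2 := by
    linarith [parallelogram_law_with_norm ℝ (z - c) (w - c), sq_nonneg ‖(z - c) + (w - c)‖]
  rw [poissonKernel_def]
  field_simp
  rw [norm_sub_sq_real (z - c) (w - c)]
  ring

theorem continuousOn_poissonKernel (c w : ℂ) : ContinuousOn (poissonKernel c w) {w}ᶜ := by
  refine ContinuousOn.div (by fun_prop) (by fun_prop) fun z hz ↦ ?_
  simpa [sub_eq_zero] using hz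

theorem circleAverage_eq_integral_neg_pi_pi {E : Type*} [NormedAddCommGroup E] [NormedSpace ℝ E]
    (f : ℂ → E) (c : ℂ) (R : ℝ) :
    circleAverage f c R = (2 * π)⁻¹ • ∫ θ in -π..π, f (circleMap c R θ) := by
  rw [circleAverage_eq_integral_add (-π),
    intervalIntegral.integral_comp_add_right (fun θ ↦ f (circleMap c R θ)),
    zero_add, two_mul, add_neg_cancel_right]

section BanachValued

variable {E : Type*} [NormedAddCommGroup E] [NormedSpace ℝ E] {u : ℂ → E} {c w : ℂ} {R : ℝ}

theorem circleIntegrable_poissonKernel_smul (hu : ContinuousOn u (sphere c R))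
    (hw : w ∈ ball c R) : CircleIntegrable (poissonKernel c w • u) c R :=
  have hsphere : sphere c R ⊆ {w}ᶜ := fun _ hz ↦ sphere_disjoint_ball.ne_of_mem hz hw
  (((continuousOn_poissonKernel c w).mono hsphere).smul hu).circleIntegrable
    (pos_of_mem_ball hw).le

variable [CompleteSpace E]

theorem circleAverage_poissonKernel_smul_of_harmonicContOnCl
    (hu : HarmonicContOnCl u (ball c R)) (hw : w ∈ ball c R) :
    circleAverage (poissonKernel c w • u) c R = u w := by
  have hint : CircleIntegrable (poissonKernel c w • u) c R :=
    circleIntegrable_poissonKernel_smul (hu.continuousOn_ball.mono sphere_subset_closedBall) hw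
  refine (SeparatingDual.eq_iff_forall_dual_eq (R := ℝ)).mpr fun l ↦ ?_
  rw [← l.circleAverage_comp_comm hint, ← Function.comp_apply (f := l) (g := u),
    ← (hu.comp_CLM l).circleAverage_poissonKernel_smul hw]
  congr 1
  ext z
  simp

theorem sub_smul_center_eq_circleAverage_of_harmonicContOnCl
    (hu : HarmonicContOnCl u (ball c R)) (hw : w ∈ ball c R) :
    u w - ((R ^ 2 - ‖w - c‖ ^ 2) / (R ^ 2 + ‖w - c‖ ^ 2)) • u c =
      circleAverage (fun z ↦
        (2 * ⟪z - c, w - c⟫_ℝ / (R ^ 2 + ‖w - c‖ ^ 2) * poissonKernel c w z) • u z) c R := by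
  have hR : |R| = R := abs_of_pos (pos_of_mem_ball hw)
  have hcont : ContinuousOn u (sphere c R) := hu.continuousOn_ball.mono sphere_subset_closedBall
  have hmean : circleAverage u c R = u c :=
    InnerProductSpace.HarmonicContOnCl.circleAverage_eq (by rwa [hR])
  rw [← circleAverage_poissonKernel_smul_of_harmonicContOnCl hu hw, ← hmean,
    ← circleAverage_smul, ← circleAverage_sub (circleIntegrable_poissonKernel_smul hcont hw)
      ((hcont.const_smul _).circleIntegrable (pos_of_mem_ball hw).le)]
  refine circleAverage_congr_sphere fun z hz ↦ ?_
  rw [hR] at hz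
  have hzw : z ≠ w := sphere_disjoint_ball.ne_of_mem hz hw
  simp only [Pi.sub_apply, Pi.smul_apply', Pi.smul_apply, ← sub_smul]
  rw [← mem_sphere_iff_norm.mp hz, poissonKernel_sub_div hzw]

theorem stmt_10_general (hu : HarmonicContOnCl u (ball c R)) {r : ℝ} (hr : |r| < R) (φ : ℝ) :
    u (circleMap c r φ) - ((R ^ 2 - r ^ 2) / (R ^ 2 + r ^ 2)) • u c =
      (r * R * (R ^ 2 - r ^ 2) / (π * (R ^ 2 + r ^ 2))) •
        ∫ θ in -π..π, (cos (θ - φ) / (R ^ 2 + r ^ 2 - 2 * r * R * cos (θ - φ))) •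
          u (circleMap c R θ) := by
  have hw : circleMap c r φ ∈ ball c R := by
    rwa [mem_ball_iff_norm, circleMap_sub_center, norm_circleMap_zero]
  have haverage := sub_smul_center_eq_circleAverage_of_harmonicContOnCl hu hw
  simp only [circleAverage_eq_integral_neg_pi_pi, circleMap_sub_center, norm_circleMap_zero,
    sq_abs, inner_circleMap_zero, poissonKernel_circleMap] at haverage
  rw [haverage, ← intervalIntegral.integral_smul, ← intervalIntegral.integral_smul]
  congr 1 with θ
  rw [smul_smul, smul_smul]
  congr 1
  field_simp

end BanachValued

/-- If `u` is continuous on the closed disk `B̄(a,R)` and harmonic on `B(a,R)`, then for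
`0 < r < R`,
`u(a+r) - ((R²-r²)/(R²+r²)) u(a)
  = (rR(R²-r²))/(π(R²+r²)) ∫_{-π}^{π} cos θ/(R²+r²-2rR cos θ) · u(a+Re^{iθ}) dθ`. -/
theorem stmt_10 (R : ℝ) (hR : 0 < R) (a : ℂ) (u : ℂ → ℂ)
    (hcont : ContinuousOn u (closedBall a R)) (hu : IsHarmonicOn u (ball a R))
    (r : ℝ) (hr : 0 < r) (hrR : r < R) :
    u (a + r) - (((R ^ 2 - r ^ 2) / (R ^ 2 + r ^ 2) : ℝ) : ℂ) * u a =
      ((r * R * (R ^ 2 - r ^ 2) / (Real.pi * (R ^ 2 + r ^ 2)) : ℝ) : ℂ) *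
        ∫ θ in (-Real.pi)..Real.pi,
          ((Real.cos θ / (R ^ 2 + r ^ 2 - 2 * r * R * Real.cos θ) : ℝ) : ℂ) *
            u (a + R * Complex.exp (θ * Complex.I)) := by
  simpa only [circleMap, Complex.real_smul, sub_zero, Complex.ofReal_zero, zero_mul,
    Complex.exp_zero, mul_one] using
    stmt_10_general (.mk_ball (hu.harmonicOnNhd isOpen_ball) hcont) ((abs_of_pos hr).trans_lt hrR) 0
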